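/- Random perturbations — convergence in probability: Let T be a rooted leafless tree (prefix-closed set of finite lists over ℕ, every vertex having at least two successors and none exactly one), with forward transition probabilities q(·|x) and q'(·|x) on N(x) at every vertex x. Assume both families {q(·|x)} and {q'(·|x)} are tight and their local entropy series are uniformly summable. Let (Ω, 𝔉, Pr) be a probability space and δ_n : Ω → [0,1] (n ≥ 0) measurable random variables; define the random transition probabilities p(y|x)(ω) = (1 − δ_{|x|}(ω))·q(y|x) + δ_{|x|}(ω)·q'(y|x) and the random flow B_P(x)(ω) as the product of p along the prefix chain from the root to x. Let ℓ be a length function and assume: (i) there are 0 < c₁ ≤ c₂ < ∞ with c₁ ≤ ℓ(x) ≤ c₂ for all x; (ii) there is a finite h with H_q(x)/ℓ(x) → h as |x| → ∞; (iii) there is D < ∞ with D_{q',q}(x) = ∑_{y∈N(x)} q'(y|x)·log₂(q'(y|x)/q(y|x)) absolutely convergent and < D for all x. If E(δ_n) → 0 as n → ∞, then H(P_n)/ℓ(P_n) → h in probability, i.e. for every ε > 0, Pr(|H(P_n)/ℓ(P_n) − h| > ε) → 0 as n → ∞. -/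

import Mathlib

open scoped BigOperators
open Filter

noncomputable section

/-- The entropy function `φ(t) = t·log₂(1/t)` (which vanishes at `t = 0`). -/
def phi (t : ℝ) : ℝ := t * Real.logb 2 (1 / t)

/-- A rooted tree: a set of finite lists over ℕ containing the empty list (the root)
and closed under taking prefixes. -/
def IsTree (T : Set (List ℕ)) : Prop :=
  ([] : List ℕ) ∈ T ∧ ∀ x ∈ T, ∀ y : List ℕ, y <+: x → y ∈ T

/-- The successors of `x` in `T`: one-entry extensions of `x` lying in `T`. -/
def succs (T : Set (List ℕ)) (x : List ℕ) : Set (List ℕ) :=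
  {y | y ∈ T ∧ ∃ n : ℕ, y = x ++ [n]}

/-- `x` is a leaf of `T`. -/
def IsLeaf (T : Set (List ℕ)) (x : List ℕ) : Prop :=
  x ∈ T ∧ succs T x = ∅

/-- The boundary of `T`: its set of leaves. -/
def bdry (T : Set (List ℕ)) : Set (List ℕ) := {x | IsLeaf T x}

/-- The interior of `T`. -/
def intr (T : Set (List ℕ)) : Set (List ℕ) := T \ bdry T

/-- No vertex has exactly one successor. -/
def NoUnary (T : Set (List ℕ)) : Prop :=
  ∀ x ∈ T, ∀ y : List ℕ, succs T x ≠ {y}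

/-- `T` has no infinite geodesic. -/
def NoInfGeo (T : Set (List ℕ)) : Prop :=
  ¬ ∃ ξ : ℕ → ℕ, ∀ n : ℕ, (List.ofFn fun i : Fin n => ξ i) ∈ T

/-- `∂T_x`: the set of leaves having `x` as a prefix. -/
def cone (T : Set (List ℕ)) (x : List ℕ) : Set (List ℕ) :=
  {v | v ∈ bdry T ∧ x <+: v}

/-- `P(∂T_x)`. -/
def mass (T : Set (List ℕ)) (P : List ℕ → ℝ) (x : List ℕ) : ℝ :=
  ∑' v : cone T x, P v

/-- `|x|_ℓ`: the sum of `ℓ(y)` over the proper prefixes `y` of `x`. -/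
def lenWt (ℓ : List ℕ → ℝ) (x : List ℕ) : ℝ :=
  ∑ i ∈ Finset.range x.length, ℓ (x.take i)

/-- Expected length `ℓ(P)`. -/
def expLen (T : Set (List ℕ)) (ℓ P : List ℕ → ℝ) : ℝ :=
  ∑' v : bdry T, lenWt ℓ v * P v

/-- Forward transition probability `p(y|x) = P(∂T_y)/P(∂T_x)`. -/
def fwd (T : Set (List ℕ)) (P : List ℕ → ℝ) (x y : List ℕ) : ℝ :=
  mass T P y / mass T P x

/-- Node-average measure `μ_P(x) = ℓ(x)·P(∂T_x)/ℓ(P)`. -/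
def nodeAvg (T : Set (List ℕ)) (ℓ P : List ℕ → ℝ) (x : List ℕ) : ℝ :=
  ℓ x * mass T P x / expLen T ℓ P

/-- A (fully supported) probability measure on a set `S` of vertices. -/
def IsProbOn (S : Set (List ℕ)) (P : List ℕ → ℝ) : Prop :=
  (∀ v ∈ S, 0 < P v) ∧ HasSum (fun v : S => P v) 1

/-- A tight family of forward transition probabilities with uniformly summable entropies:
for every `ε > 0` there is `M` such that every `x ∈ T` admits `N_ε(x) ⊆ N(x)` with
`|N_ε(x)| ≤ M`, `∑_{y∈N(x)∖N_ε(x)} q(y|x) < ε` and `∑_{y∈N(x)∖N_ε(x)} φ(q(y|x)) < ε`. -/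
def TightFam (T : Set (List ℕ)) (q : List ℕ → List ℕ → ℝ) : Prop :=
  ∀ ε : ℝ, 0 < ε → ∃ M : ℕ, ∀ x ∈ T,
    ∃ F : Finset (List ℕ), ↑F ⊆ succs T x ∧ F.card ≤ M ∧
      (∑' y : {y : List ℕ // y ∈ succs T x ∧ y ∉ F}, q x y) < ε ∧
      (Summable fun y : {y : List ℕ // y ∈ succs T x ∧ y ∉ F} => phi (q x y)) ∧
      (∑' y : {y : List ℕ // y ∈ succs T x ∧ y ∉ F}, phi (q x y)) < ε

/-- The random perturbation `p(y|x)(ω) = (1 − δ_{|x|}(ω))·q(y|x) + δ_{|x|}(ω)·q'(y|x)`. -/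
def perturb {Ω : Type*} (q q' : List ℕ → List ℕ → ℝ) (δn : ℕ → Ω → ℝ)
    (x y : List ℕ) (ω : Ω) : ℝ :=
  (1 - δn x.length ω) * q x y + δn x.length ω * q' x y

/-- The (random) flow obtained by multiplying the transition probabilities `p` along the
prefix chain from the root to `x`. -/
def flowOf {Ω : Type*} (p : List ℕ → List ℕ → Ω → ℝ) (x : List ℕ) (ω : Ω) : ℝ :=
  ∏ i ∈ Finset.range x.length, p (x.take i) (x.take (i + 1)) ω

/-- The `n`-th level `S(n) = {x ∈ T : |x| = n}` of a leafless tree. -/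
def levn (T : Set (List ℕ)) (n : ℕ) : Set (List ℕ) :=
  {x | x ∈ T ∧ x.length = n}

/-!
By the chain rule for entropy, `H(P_n) = ∑_{k<n} ∑_{x∈S(k)} B_P(x)·H_p(x)`, and likewise
`ℓ(P_n) = ∑_{k<n} ∑_{x∈S(k)} B_P(x)·ℓ(x) ≥ c₁·n`. Hence, if `|H_p(x) − h·ℓ(x)| ≤ g(|x|)` at every
vertex, then `|H(P_n)/ℓ(P_n) − h|` is at most `1/c₁` times the Cesàro mean of `g(0), …, g(n-1)`.

For `p = (1-δ)·q + δ·q'`, concavity and subadditivity of `φ` give `|H_p − H_q| ≤ C·δ + h₂(δ)`, where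
`C` bounds the local entropies of `q` and `q'` and `h₂` is the binary entropy. Thus `g` may be taken
to be `a_k + C·δ_k + h₂(δ_k)` with a deterministic `a_k → 0`. Its expectation tends to `0`, since
`E h₂(δ_k) ≤ h₂(E δ_k)` by Jensen's inequality, so do the Cesàro means, and Markov's inequality
turns this into convergence in probability.
-/

open scoped Topology

section EntropyFunction

variable {a b t : ℝ}

lemma phi_eq_negMulLog_div (t : ℝ) : phi t = Real.negMulLog t / Real.log 2 := by
  rw [phi, Real.negMulLog, Real.logb, one_div, Real.log_inv]
  ring

lemma phi_mul (a b : ℝ) : phi (a * b) = b * phi a + a * phi b := by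
  simp only [phi_eq_negMulLog_div, Real.negMulLog_mul]
  ring

lemma phi_nonneg (ht₀ : 0 ≤ t) (ht₁ : t ≤ 1) : 0 ≤ phi t := by
  rw [phi_eq_negMulLog_div]
  exact div_nonneg (Real.negMulLog_nonneg ht₀ ht₁) (Real.log_nonneg one_le_two)

lemma phi_le_inv_log_two (ht : 0 ≤ t) : phi t ≤ (Real.log 2)⁻¹ := by
  rw [phi_eq_negMulLog_div, ← one_div]
  gcongr
  linarith [Real.negMulLog_le_one_sub_self ht]

lemma phi_add_phi_one_sub (t : ℝ) : phi t + phi (1 - t) = Real.binEntropy t / Real.log 2 := by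
  rw [phi_eq_negMulLog_div, phi_eq_negMulLog_div,
    Real.binEntropy_eq_negMulLog_add_negMulLog_one_sub, add_div]

lemma concaveOn_phi : ConcaveOn ℝ (Set.Ici 0) phi := by
  have hphi : phi = (Real.log 2)⁻¹ • Real.negMulLog := by
    ext t
    rw [phi_eq_negMulLog_div, Pi.smul_apply, smul_eq_mul, inv_mul_eq_div]
  exact hphi ▸ Real.concaveOn_negMulLog.smul (inv_nonneg.2 (Real.log_nonneg one_le_two))

lemma phi_add_le (ha : 0 ≤ a) (hb : 0 ≤ b) : phi (a + b) ≤ phi a + phi b := by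
  have negMulLog_add_le : Real.negMulLog (a + b) ≤ Real.negMulLog a + Real.negMulLog b := by
    have mul_log_le {c : ℝ} (hc : 0 ≤ c) (hcab : c ≤ a + b) :
        c * Real.log c ≤ c * Real.log (a + b) := by
      rcases hc.eq_or_lt with rfl | hc'
      · simp
      · gcongr
    have hmul_a := mul_log_le ha (by linarith)
    have hmul_b := mul_log_le hb (by linarith)
    simp only [Real.negMulLog]
    linarith
  simp only [phi_eq_negMulLog_div, ← add_div]
  gcongr

lemma le_phi_mix (ha : 0 ≤ a) (hb : 0 ≤ b) (ht₀ : 0 ≤ t) (ht₁ : t ≤ 1) :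
    (1 - t) * phi a + t * phi b ≤ phi ((1 - t) * a + t * b) :=
  concaveOn_phi.2 ha hb (sub_nonneg.2 ht₁) ht₀ (sub_add_cancel 1 t)

lemma phi_mix_le (ha : 0 ≤ a) (hb : 0 ≤ b) (ht₀ : 0 ≤ t) (ht₁ : t ≤ 1) :
    phi ((1 - t) * a + t * b) ≤
      (1 - t) * phi a + t * phi b + (phi (1 - t) * a + phi t * b) := by
  have hsub := phi_add_le (mul_nonneg (sub_nonneg.2 ht₁) ha) (mul_nonneg ht₀ hb)
  rw [phi_mul, phi_mul] at hsub
  linarith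

end EntropyFunction

section MixtureEntropy

variable {ι : Type*} {a b : ι → ℝ} {t : ℝ}

lemma summable_phi_mix (ha : ∀ i, 0 ≤ a i) (hb : ∀ i, 0 ≤ b i) (ha_sum : Summable a)
    (hb_sum : Summable b) (ha_phi : Summable fun i => phi (a i))
    (hb_phi : Summable fun i => phi (b i)) (ht₀ : 0 ≤ t) (ht₁ : t ≤ 1) :
    Summable fun i => phi ((1 - t) * a i + t * b i) := by
  have hlower := (ha_phi.mul_left (1 - t)).add (hb_phi.mul_left t)
  have hgap : Summable fun i =>
      phi ((1 - t) * a i + t * b i) - ((1 - t) * phi (a i) + t * phi (b i)) :=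
    .of_nonneg_of_le (fun i => sub_nonneg.2 (le_phi_mix (ha i) (hb i) ht₀ ht₁))
      (fun i => sub_le_iff_le_add'.2 (phi_mix_le (ha i) (hb i) ht₀ ht₁))
      ((ha_sum.mul_left (phi (1 - t))).add (hb_sum.mul_left (phi t)))
  exact (hgap.add hlower).congr fun i => sub_add_cancel _ _

lemma tsum_phi_mix_mem_Icc (ha : ∀ i, 0 ≤ a i) (hb : ∀ i, 0 ≤ b i) (ha_one : HasSum a 1)
    (hb_one : HasSum b 1) (ha_phi : Summable fun i => phi (a i))
    (hb_phi : Summable fun i => phi (b i)) (ht₀ : 0 ≤ t) (ht₁ : t ≤ 1) :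
    (∑' i, phi ((1 - t) * a i + t * b i)) ∈
      Set.Icc ((1 - t) * (∑' i, phi (a i)) + t * ∑' i, phi (b i))
        ((1 - t) * (∑' i, phi (a i)) + t * (∑' i, phi (b i)) +
          Real.binEntropy t / Real.log 2) := by
  have hmix :=
    (summable_phi_mix ha hb ha_one.summable hb_one.summable ha_phi hb_phi ht₀ ht₁).hasSum
  have hlower := (ha_phi.hasSum.mul_left (1 - t)).add (hb_phi.hasSum.mul_left t)
  have hupper := hlower.add ((ha_one.mul_left (phi (1 - t))).add (hb_one.mul_left (phi t)))
  rw [mul_one, mul_one, add_comm (phi (1 - t)), phi_add_phi_one_sub] at hupper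
  exact ⟨hasSum_le (fun i => le_phi_mix (ha i) (hb i) ht₀ ht₁) hlower hmix,
    hasSum_le (fun i => phi_mix_le (ha i) (hb i) ht₀ ht₁) hmix hupper⟩

end MixtureEntropy

section WeightedMean

variable {ι : Type*} {w f : ι → ℝ} {c : ℝ}

lemma summable_mul_of_abs_le (hw : ∀ i, 0 ≤ w i) (hw_sum : Summable w) (hf : ∀ i, |f i| ≤ c) :
    Summable fun i => w i * f i :=
  .of_norm_bounded (hw_sum.mul_right c) fun i => by
    rw [Real.norm_eq_abs, abs_mul, abs_of_nonneg (hw i)]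
    exact mul_le_mul_of_nonneg_left (hf i) (hw i)

lemma le_tsum_mul_of_forall_le (hw : ∀ i, 0 ≤ w i) (hw_one : HasSum w 1)
    (hwf : Summable fun i => w i * f i) (hf : ∀ i, c ≤ f i) : c ≤ ∑' i, w i * f i := by
  simpa using hasSum_le (fun i => mul_le_mul_of_nonneg_left (hf i) (hw i))
    (hw_one.mul_right c) hwf.hasSum

lemma abs_tsum_mul_le (hw : ∀ i, 0 ≤ w i) (hw_one : HasSum w 1) (hf : ∀ i, |f i| ≤ c) :
    |∑' i, w i * f i| ≤ c := by
  have hwf := summable_mul_of_abs_le hw hw_one.summable hf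
  refine abs_le.2 ⟨le_tsum_mul_of_forall_le hw hw_one hwf fun i => (abs_le.1 (hf i)).1, ?_⟩
  have hneg := le_tsum_mul_of_forall_le (f := fun i => -f i) hw hw_one (by simpa using hwf.neg)
    fun i => neg_le_neg (abs_le.1 (hf i)).2
  simp only [mul_neg, tsum_neg] at hneg
  exact neg_le_neg_iff.1 hneg

end WeightedMean

section Tree

variable {T : Set (List ℕ)} {x y : List ℕ} {n : ℕ}

namespace IsTree

lemma take_mem (hT : IsTree T) (hx : x ∈ T) (i : ℕ) : x.take i ∈ T :=
  hT.2 x hx _ (List.take_prefix i x)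

lemma take_succ_mem_succs (hT : IsTree T) (hx : x ∈ T) {i : ℕ} (hi : i < x.length) :
    x.take (i + 1) ∈ succs T (x.take i) :=
  ⟨hT.take_mem hx _, x[i], List.take_succ_eq_append_getElem hi⟩

lemma levn_zero (hT : IsTree T) : levn T 0 = {[]} := by
  ext x
  exact ⟨fun hx => List.length_eq_zero_iff.1 hx.2, by rintro rfl; exact ⟨hT.1, rfl⟩⟩

end IsTree

lemma mem_levn_succ (hx : x ∈ levn T n) (hy : y ∈ succs T x) : y ∈ levn T (n + 1) := by
  obtain ⟨hyT, m, rfl⟩ := hy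
  exact ⟨hyT, by simp [hx.2]⟩

lemma IsTree.bijective_sigma_succs (hT : IsTree T) (n : ℕ) :
    Function.Bijective fun z : Σ x : levn T n, succs T x =>
      (⟨z.2, mem_levn_succ z.1.2 z.2.2⟩ : levn T (n + 1)) := by
  constructor
  · rintro ⟨⟨x, hx, hxn⟩, ⟨_, hy, m, rfl⟩⟩ ⟨⟨x', hx', hxn'⟩, ⟨_, hy', m', rfl⟩⟩ heq
    obtain ⟨rfl, hm⟩ := List.append_inj (congrArg Subtype.val heq) (hxn.trans hxn'.symm)
    obtain rfl : m = m' := by simpa using hm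
    rfl
  · rintro ⟨y, hy, hyn⟩
    have hsucc := hT.take_succ_mem_succs hy (i := n) (by lia)
    rw [← hyn, List.take_length] at hsucc
    exact ⟨⟨⟨y.take n, hT.take_mem hy n, by simp [hyn]⟩, ⟨y, hsucc⟩⟩, rfl⟩

lemma IsTree.hasSum_levn_succ (hT : IsTree T) {F G : List ℕ → ℝ} {s : ℝ}
    (hF : ∀ y ∈ levn T (n + 1), 0 ≤ F y)
    (hFG : ∀ x ∈ levn T n, HasSum (fun y : succs T x => F y) (G x))
    (hG : HasSum (fun x : levn T n => G x) s) :
    HasSum (fun y : levn T (n + 1) => F y) s := by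
  rw [← (Equiv.ofBijective _ (hT.bijective_sigma_succs n)).hasSum_iff]
  have hsum : Summable fun z : Σ x : levn T n, succs T x => F z.2 := by
    rw [summable_sigma_of_nonneg fun z => hF _ (mem_levn_succ z.1.2 z.2.2)]
    exact ⟨fun x => (hFG x x.2).summable, hG.summable.congr fun x => (hFG x x.2).tsum_eq.symm⟩
  exact hG.sigma_of_hasSum (fun x => hFG x x.2) hsum

/-- A discrete fundamental theorem of calculus along the levels of a tree. -/
lemma IsTree.hasSum_levn (hT : IsTree T) {F G : List ℕ → ℝ} (hF : ∀ x ∈ T, 0 ≤ F x)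
    (hFG : ∀ x ∈ T, HasSum (fun y : succs T x => F y) (F x + G x))
    (hG : ∀ k, Summable fun x : levn T k => G x) (n : ℕ) :
    HasSum (fun x : levn T n => F x) (F [] + ∑ k ∈ Finset.range n, ∑' x : levn T k, G x) := by
  induction n with
  | zero =>
    rw [hT.levn_zero, Finset.sum_range_zero, add_zero]
    exact hasSum_unique fun x : ({[]} : Set (List ℕ)) => F x
  | succ n ih =>
    rw [Finset.sum_range_succ, ← add_assoc]
    exact hT.hasSum_levn_succ (fun y hy => hF y hy.1) (fun x hx => hFG x hx.1)
      (ih.add (hG n).hasSum)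

lemma take_of_mem_succs (hy : y ∈ succs T x) {i : ℕ} (hi : i ≤ x.length) :
    y.take i = x.take i := by
  obtain ⟨-, m, rfl⟩ := hy
  exact List.take_append_of_le_length hi

lemma length_of_mem_succs (hy : y ∈ succs T x) : y.length = x.length + 1 := by
  obtain ⟨-, m, rfl⟩ := hy
  simp

lemma lenWt_succ (ℓ : List ℕ → ℝ) (hy : y ∈ succs T x) : lenWt ℓ y = lenWt ℓ x + ℓ x := by
  rw [lenWt, length_of_mem_succs hy, Finset.sum_range_succ, take_of_mem_succs hy le_rfl,
    List.take_length, lenWt]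
  congr 1
  exact Finset.sum_congr rfl fun i hi => by rw [take_of_mem_succs hy (Finset.mem_range.1 hi).le]

lemma IsTree.lenWt_nonneg (hT : IsTree T) {ℓ : List ℕ → ℝ} (hℓ : ∀ x ∈ T, 0 ≤ ℓ x) (hx : x ∈ T) :
    0 ≤ lenWt ℓ x :=
  Finset.sum_nonneg fun i _ => hℓ _ (hT.take_mem hx i)

end Tree

/-- A family of forward transition probabilities on `T`: `p x y` stands for `p(y|x)`, and only its
values at `x ∈ T`, `y ∈ N(x)` matter. -/
structure IsTransition (T : Set (List ℕ)) (p : List ℕ → List ℕ → ℝ) : Prop where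
  nonneg : ∀ x ∈ T, ∀ y ∈ succs T x, 0 ≤ p x y
  hasSum_one : ∀ x ∈ T, HasSum (fun y : succs T x => p x y) 1

/-- The local entropy `H_p(x) = ∑_{y∈N(x)} φ(p(y|x))` (zero when the series diverges). -/
def localEntropy (T : Set (List ℕ)) (p : List ℕ → List ℕ → ℝ) (x : List ℕ) : ℝ :=
  ∑' y : succs T x, phi (p x y)

/-- All local entropies of `p` are convergent series, with a common upper bound. This is what
tightness with uniformly summable entropies contributes to the entropy estimates. -/
def HasBoundedEntropy (T : Set (List ℕ)) (p : List ℕ → List ℕ → ℝ) : Prop :=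
  ∃ C, ∀ x ∈ T, (Summable fun y : succs T x => phi (p x y)) ∧ localEntropy T p x ≤ C

/-- A modulus of continuity of the local entropy: mixing a fraction `t` of other transition
probabilities into given ones changes the local entropy by at most this much, if both local
entropies are at most `C`. -/
def entropyModulus (C t : ℝ) : ℝ := C * t + Real.binEntropy t / Real.log 2

/-- The mean of `f` over the level `S(n)` with weights `B`. -/
def levelMean (T : Set (List ℕ)) (B f : List ℕ → ℝ) (n : ℕ) : ℝ :=
  ∑' x : levn T n, B x * f x

section LocalEntropy

variable {T : Set (List ℕ)} {p q q' : List ℕ → List ℕ → ℝ} {x : List ℕ}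

namespace IsTransition

lemma le_one (hp : IsTransition T p) (hx : x ∈ T) {y : List ℕ} (hy : y ∈ succs T x) :
    p x y ≤ 1 :=
  le_hasSum (hp.hasSum_one x hx) ⟨y, hy⟩ fun z _ => hp.nonneg x hx z z.2

lemma localEntropy_nonneg (hp : IsTransition T p) (hx : x ∈ T) : 0 ≤ localEntropy T p x :=
  tsum_nonneg fun y : succs T x => phi_nonneg (hp.nonneg x hx y y.2) (hp.le_one hx y.2)

end IsTransition

lemma TightFam.hasBoundedEntropy (hp : TightFam T p)
    (hp₀ : ∀ x ∈ T, ∀ y ∈ succs T x, 0 ≤ p x y) : HasBoundedEntropy T p := by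
  obtain ⟨M, hM⟩ := hp 1 one_pos
  refine ⟨M * (Real.log 2)⁻¹ + 1, fun x hx => ?_⟩
  obtain ⟨F, hF, hcard, -, htail, htail_lt⟩ := hM x hx
  have hsplit : HasSum (fun y : succs T x => phi (p x y))
      (∑ y ∈ F, phi (p x y) + ∑' y : {y : List ℕ // y ∈ succs T x ∧ y ∉ F}, phi (p x y)) := by
    have hunion : HasSum ((fun y => phi (p x y)) ∘
        ((↑) : (↑F ∪ succs T x \ ↑F : Set (List ℕ)) → List ℕ)) _ :=
      (F.hasSum fun y => phi (p x y)).add_disjoint Set.disjoint_sdiff_right htail.hasSum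
    rwa [Set.union_sdiff_cancel hF] at hunion
  have hhead : ∑ y ∈ F, phi (p x y) ≤ M * (Real.log 2)⁻¹ :=
    calc ∑ y ∈ F, phi (p x y) ≤ F.card * (Real.log 2)⁻¹ := by
          simpa using F.sum_le_card_nsmul (fun y => phi (p x y)) _
            fun y hy => phi_le_inv_log_two (hp₀ x hx y (hF hy))
      _ ≤ M * (Real.log 2)⁻¹ := by gcongr
  exact ⟨hsplit.summable, hsplit.tsum_eq.trans_le (add_le_add hhead htail_lt.le)⟩

variable {Ω : Type*} {δn : ℕ → Ω → ℝ} {ω : Ω}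

lemma isTransition_perturb (hq : IsTransition T q) (hq' : IsTransition T q')
    (hδ : ∀ n, δn n ω ∈ Set.Icc 0 1) : IsTransition T (perturb q q' δn · · ω) where
  nonneg x hx y hy := add_nonneg (mul_nonneg (sub_nonneg.2 (hδ _).2) (hq.nonneg x hx y hy))
    (mul_nonneg (hδ _).1 (hq'.nonneg x hx y hy))
  hasSum_one x hx := by
    simpa [perturb] using ((hq.hasSum_one x hx).mul_left (1 - δn x.length ω)).add
      ((hq'.hasSum_one x hx).mul_left (δn x.length ω))

lemma summable_phi_perturb (hq : IsTransition T q) (hq' : IsTransition T q') (hx : x ∈ T)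
    (hq_phi : Summable fun y : succs T x => phi (q x y))
    (hq'_phi : Summable fun y : succs T x => phi (q' x y)) (hδ : δn x.length ω ∈ Set.Icc 0 1) :
    Summable fun y : succs T x => phi (perturb q q' δn x y ω) :=
  summable_phi_mix (fun y : succs T x => hq.nonneg x hx y y.2)
    (fun y : succs T x => hq'.nonneg x hx y y.2) (hq.hasSum_one x hx).summable
    (hq'.hasSum_one x hx).summable hq_phi hq'_phi hδ.1 hδ.2

lemma abs_localEntropy_perturb_sub_le (hq : IsTransition T q) (hq' : IsTransition T q') (hx : x ∈ T)
    (hq_phi : Summable fun y : succs T x => phi (q x y))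
    (hq'_phi : Summable fun y : succs T x => phi (q' x y)) (hδ : δn x.length ω ∈ Set.Icc 0 1)
    {C : ℝ} (hC : localEntropy T q x ≤ C) (hC' : localEntropy T q' x ≤ C) :
    |localEntropy T (perturb q q' δn · · ω) x - localEntropy T q x| ≤
      entropyModulus C (δn x.length ω) := by
  set t := δn x.length ω
  obtain ⟨hlower, hupper⟩ : localEntropy T (perturb q q' δn · · ω) x ∈ Set.Icc
      ((1 - t) * localEntropy T q x + t * localEntropy T q' x)
      ((1 - t) * localEntropy T q x + t * localEntropy T q' x + Real.binEntropy t / Real.log 2) :=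
    tsum_phi_mix_mem_Icc (fun y : succs T x => hq.nonneg x hx y y.2)
      (fun y : succs T x => hq'.nonneg x hx y y.2) (hq.hasSum_one x hx) (hq'.hasSum_one x hx)
      hq_phi hq'_phi hδ.1 hδ.2
  have hdiff : |t * (localEntropy T q' x - localEntropy T q x)| ≤ t * C := by
    rw [abs_mul, abs_of_nonneg hδ.1]
    exact mul_le_mul_of_nonneg_left (abs_sub_le_of_nonneg_of_le (hq'.localEntropy_nonneg hx) hC'
      (hq.localEntropy_nonneg hx) hC) hδ.1
  have hbin : 0 ≤ Real.binEntropy t / Real.log 2 :=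
    div_nonneg (Real.binEntropy_nonneg hδ.1 hδ.2) (Real.log_nonneg one_le_two)
  obtain ⟨hdiff_lower, hdiff_upper⟩ := abs_le.1 hdiff
  rw [entropyModulus, abs_le]
  constructor <;> linarith [hbin, hdiff_lower, hdiff_upper]

end LocalEntropy

section Flow

variable {Ω : Type*} {T : Set (List ℕ)} {p : List ℕ → List ℕ → Ω → ℝ} {ω : Ω} {x : List ℕ} {n : ℕ}

lemma flowOf_nil (p : List ℕ → List ℕ → Ω → ℝ) (ω : Ω) : flowOf p [] ω = 1 := by
  simp [flowOf]

lemma flowOf_succ (p : List ℕ → List ℕ → Ω → ℝ) (ω : Ω) {y : List ℕ} (hy : y ∈ succs T x) :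
    flowOf p y ω = flowOf p x ω * p x y ω := by
  have htake : y.take (x.length + 1) = y := List.take_of_length_le (length_of_mem_succs hy).le
  rw [flowOf, length_of_mem_succs hy, Finset.prod_range_succ, htake, take_of_mem_succs hy le_rfl,
    List.take_length, flowOf]
  congr 1
  refine Finset.prod_congr rfl fun i hi => ?_
  have hi' := Finset.mem_range.1 hi
  rw [take_of_mem_succs hy hi'.le, take_of_mem_succs hy hi']

lemma flowOf_nonneg (hT : IsTree T) (hp : IsTransition T (p · · ω)) (hx : x ∈ T) :
    0 ≤ flowOf p x ω :=
  Finset.prod_nonneg fun i hi =>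
    hp.nonneg _ (hT.take_mem hx i) _ (hT.take_succ_mem_succs hx (Finset.mem_range.1 hi))

lemma flowOf_le_one (hT : IsTree T) (hp : IsTransition T (p · · ω)) (hx : x ∈ T) :
    flowOf p x ω ≤ 1 :=
  Finset.prod_le_one
    (fun i hi =>
      hp.nonneg _ (hT.take_mem hx i) _ (hT.take_succ_mem_succs hx (Finset.mem_range.1 hi)))
    fun i hi => hp.le_one (hT.take_mem hx i) (hT.take_succ_mem_succs hx (Finset.mem_range.1 hi))

lemma hasSum_flowOf_succs (hp : IsTransition T (p · · ω)) (hx : x ∈ T) :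
    HasSum (fun y : succs T x => flowOf p y ω) (flowOf p x ω) := by
  simpa [← flowOf_succ p ω (Subtype.prop _)] using
    (hp.hasSum_one x hx).mul_left (flowOf p x ω)

lemma hasSum_flowOf_levn (hT : IsTree T) (hp : IsTransition T (p · · ω)) (n : ℕ) :
    HasSum (fun x : levn T n => flowOf p x ω) 1 := by
  simpa [flowOf_nil] using hT.hasSum_levn (F := (flowOf p · ω)) (G := 0)
    (fun x hx => flowOf_nonneg hT hp hx)
    (fun x hx => by simpa using hasSum_flowOf_succs hp hx) (fun _ => summable_zero) n

lemma summable_flowOf_mul (hT : IsTree T) (hp : IsTransition T (p · · ω)) {f : List ℕ → ℝ} {C : ℝ}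
    (hf : ∀ x ∈ levn T n, |f x| ≤ C) : Summable fun x : levn T n => flowOf p x ω * f x :=
  summable_mul_of_abs_le (fun x : levn T n => flowOf_nonneg hT hp x.2.1)
    (hasSum_flowOf_levn hT hp n).summable fun x : levn T n => hf x x.2

lemma le_levelMean_flowOf (hT : IsTree T) (hp : IsTransition T (p · · ω)) {f : List ℕ → ℝ} {c : ℝ}
    (hf_sum : Summable fun x : levn T n => flowOf p x ω * f x) (hf : ∀ x ∈ levn T n, c ≤ f x) :
    c ≤ levelMean T (flowOf p · ω) f n :=
  le_tsum_mul_of_forall_le (fun x : levn T n => flowOf_nonneg hT hp x.2.1)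
    (hasSum_flowOf_levn hT hp n) hf_sum fun x => hf x x.2

lemma abs_levelMean_flowOf_sub_le (hT : IsTree T) (hp : IsTransition T (p · · ω))
    {f₁ f₂ : List ℕ → ℝ} (hf₁ : Summable fun x : levn T n => flowOf p x ω * f₁ x)
    (hf₂ : Summable fun x : levn T n => flowOf p x ω * f₂ x) {h C : ℝ}
    (hle : ∀ x ∈ levn T n, |f₁ x - h * f₂ x| ≤ C) :
    |levelMean T (flowOf p · ω) f₁ n - h * levelMean T (flowOf p · ω) f₂ n| ≤ C := by
  rw [levelMean, levelMean, ← tsum_mul_left, ← hf₁.tsum_sub (hf₂.mul_left h)]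
  simpa only [mul_sub, mul_left_comm h] using
    abs_tsum_mul_le (fun x : levn T n => flowOf_nonneg hT hp x.2.1) (hasSum_flowOf_levn hT hp n)
      fun x => hle x x.2

lemma hasSum_phi_flowOf (hT : IsTree T) (hp : IsTransition T (p · · ω))
    (hp_phi : ∀ x ∈ T, Summable fun y : succs T x => phi (p x y ω))
    (hsum : ∀ k, Summable fun x : levn T k => flowOf p x ω * localEntropy T (p · · ω) x) (n : ℕ) :
    HasSum (fun x : levn T n => phi (flowOf p x ω))
      (∑ k ∈ Finset.range n, levelMean T (flowOf p · ω) (localEntropy T (p · · ω)) k) := by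
  have chain_rule : ∀ x ∈ T, HasSum (fun y : succs T x => phi (flowOf p y ω))
      (phi (flowOf p x ω) + flowOf p x ω * localEntropy T (p · · ω) x) := fun x hx => by
    have hmul := ((hp.hasSum_one x hx).mul_left (phi (flowOf p x ω))).add
      ((hp_phi x hx).hasSum.mul_left (flowOf p x ω))
    rw [mul_one] at hmul
    exact hmul.congr_fun fun y => by rw [flowOf_succ p ω y.2, phi_mul, mul_comm (p x y ω)]
  simpa [flowOf_nil, phi, levelMean] using hT.hasSum_levn
    (fun x hx => phi_nonneg (flowOf_nonneg hT hp hx) (flowOf_le_one hT hp hx)) chain_rule hsum n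

lemma hasSum_lenWt_mul_flowOf (hT : IsTree T) (hp : IsTransition T (p · · ω)) {ℓ : List ℕ → ℝ}
    (hℓ : ∀ x ∈ T, 0 ≤ ℓ x) (hsum : ∀ k, Summable fun x : levn T k => flowOf p x ω * ℓ x) (n : ℕ) :
    HasSum (fun x : levn T n => lenWt ℓ x * flowOf p x ω)
      (∑ k ∈ Finset.range n, levelMean T (flowOf p · ω) ℓ k) := by
  have leibniz : ∀ x ∈ T, HasSum (fun y : succs T x => lenWt ℓ y * flowOf p y ω)
      (lenWt ℓ x * flowOf p x ω + flowOf p x ω * ℓ x) := fun x hx => by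
    have hmul := (hasSum_flowOf_succs hp hx).mul_left (lenWt ℓ x + ℓ x)
    rw [add_mul, mul_comm (ℓ x)] at hmul
    exact hmul.congr_fun fun y => by rw [lenWt_succ ℓ y.2]
  simpa [lenWt, levelMean] using hT.hasSum_levn
    (fun x hx => mul_nonneg (hT.lenWt_nonneg hℓ hx) (flowOf_nonneg hT hp hx)) leibniz hsum n

lemma abs_div_sub_le {E L h c S : ℝ} (hc : 0 < c) (hL : c ≤ L) (hS : |E - h * L| ≤ S) :
    |E / L - h| ≤ S / c := by
  have hL₀ : 0 < L := hc.trans_le hL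
  calc |E / L - h| = |E - h * L| / L := by
        rw [div_sub' hL₀.ne', abs_div, abs_of_pos hL₀, mul_comm L]
    _ ≤ S / c := div_le_div₀ ((abs_nonneg _).trans hS) hS hc hL

theorem abs_entropy_div_length_sub_le (hT : IsTree T) (hp : IsTransition T (p · · ω))
    (hp_phi : ∀ x ∈ T, Summable fun y : succs T x => phi (p x y ω))
    {ℓ : List ℕ → ℝ} {c₁ c₂ : ℝ} (hc₁ : 0 < c₁) (hℓ : ∀ x ∈ T, c₁ ≤ ℓ x ∧ ℓ x ≤ c₂)
    {h : ℝ} {g : ℕ → ℝ} (hg : ∀ x ∈ T, |localEntropy T (p · · ω) x - h * ℓ x| ≤ g x.length)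
    (hn : 0 < n) :
    |(∑' x : levn T n, phi (flowOf p x ω)) / (∑' x : levn T n, lenWt ℓ x * flowOf p x ω) - h| ≤
      c₁⁻¹ * ((n : ℝ)⁻¹ * ∑ k ∈ Finset.range n, g k) := by
  have hℓ₀ : ∀ x ∈ T, 0 ≤ ℓ x := fun x hx => hc₁.le.trans (hℓ x hx).1
  have hsum_ℓ k : Summable fun x : levn T k => flowOf p x ω * ℓ x :=
    summable_flowOf_mul hT hp fun x hx => by
      rw [abs_of_nonneg (hℓ₀ x hx.1)]
      exact (hℓ x hx.1).2
  have hg_levn k : ∀ x ∈ levn T k, |localEntropy T (p · · ω) x - h * ℓ x| ≤ g k :=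
    fun x hx => (hg x hx.1).trans_eq (congrArg g hx.2)
  have hsum_H k : Summable fun x : levn T k => flowOf p x ω * localEntropy T (p · · ω) x :=
    ((summable_flowOf_mul hT hp (hg_levn k)).add ((hsum_ℓ k).mul_left h)).congr fun x => by ring
  rw [(hasSum_phi_flowOf hT hp hp_phi hsum_H n).tsum_eq,
    (hasSum_lenWt_mul_flowOf hT hp hℓ₀ hsum_ℓ n).tsum_eq, ← mul_assoc, ← mul_inv, inv_mul_eq_div]
  refine abs_div_sub_le (by positivity) ?_ ?_
  · simpa [mul_comm] using Finset.card_nsmul_le_sum (Finset.range n) _ c₁ fun k _ =>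
      le_levelMean_flowOf hT hp (hsum_ℓ k) fun x hx => (hℓ x hx.1).1
  · rw [Finset.mul_sum, ← Finset.sum_sub_distrib]
    exact (Finset.abs_sum_le_sum_abs _ _).trans <| Finset.sum_le_sum fun k _ =>
      abs_levelMean_flowOf_sub_le hT hp (hsum_H k) (hsum_ℓ k) (hg_levn k)

end Flow

section Convergence

lemma exists_tendsto_zero_forall_le {α : Type*} {s : Set α} {rank : α → ℕ} {f : α → ℝ}
    (hf₀ : ∀ x ∈ s, 0 ≤ f x) (hf : BddAbove (f '' s))
    (hlim : ∀ ε, 0 < ε → ∃ k, ∀ x ∈ s, k ≤ rank x → f x < ε) :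
    ∃ a : ℕ → ℝ, Tendsto a atTop (𝓝 0) ∧ ∀ x ∈ s, f x ≤ a (rank x) := by
  let level (k : ℕ) : Set α := {x ∈ s | rank x = k}
  refine ⟨fun k => sSup (f '' level k), ?_, fun x hx =>
    le_csSup (hf.mono (Set.image_mono fun _ hy => hy.1)) (Set.mem_image_of_mem f ⟨hx, rfl⟩)⟩
  refine tendsto_order.2 ⟨fun ε hε => .of_forall fun k => hε.trans_le <|
    Real.sSup_nonneg (Set.forall_mem_image.2 fun x hx => hf₀ x hx.1), fun ε hε => ?_⟩
  obtain ⟨k₀, hk₀⟩ := hlim (ε / 2) (half_pos hε)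
  filter_upwards [eventually_ge_atTop k₀] with k hk
  refine (Real.sSup_le (Set.forall_mem_image.2 ?_) (half_pos hε).le).trans_lt (half_lt_self hε)
  rintro x ⟨hx, rfl⟩
  exact (hk₀ x hx hk).le

lemma exists_tendsto_zero_abs_localEntropy_sub_le {T : Set (List ℕ)} {q : List ℕ → List ℕ → ℝ}
    (hq : IsTransition T q) {C : ℝ} (hC : ∀ x ∈ T, localEntropy T q x ≤ C)
    {ℓ : List ℕ → ℝ} {c₁ c₂ : ℝ} (hc₁ : 0 < c₁) (hℓ : ∀ x ∈ T, c₁ ≤ ℓ x ∧ ℓ x ≤ c₂) {h : ℝ}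
    (hh : ∀ ε, 0 < ε → ∃ k, ∀ x ∈ T, k ≤ x.length → |localEntropy T q x / ℓ x - h| < ε) :
    ∃ a : ℕ → ℝ, Tendsto a atTop (𝓝 0) ∧
      ∀ x ∈ T, |localEntropy T q x - h * ℓ x| ≤ a x.length := by
  have hbdd : BddAbove ((fun x => |localEntropy T q x / ℓ x - h|) '' T) := by
    refine ⟨C / c₁ + |h|, Set.forall_mem_image.2 fun x hx => (abs_sub _ _).trans ?_⟩
    have hH₀ := hq.localEntropy_nonneg hx
    have hℓ₀ : 0 < ℓ x := hc₁.trans_le (hℓ x hx).1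
    rw [abs_of_nonneg (div_nonneg hH₀ hℓ₀.le)]
    gcongr
    exacts [hH₀.trans (hC x hx), hC x hx, (hℓ x hx).1]
  obtain ⟨a, ha, hle⟩ := exists_tendsto_zero_forall_le (fun _ _ => abs_nonneg _) hbdd hh
  refine ⟨fun k => a k * c₂, by simpa using ha.mul_const c₂, fun x hx => ?_⟩
  have hℓ₀ : 0 < ℓ x := hc₁.trans_le (hℓ x hx).1
  calc |localEntropy T q x - h * ℓ x| = |localEntropy T q x / ℓ x - h| * ℓ x := by
        rw [← abs_of_pos hℓ₀, ← abs_mul, abs_of_pos hℓ₀, sub_mul, div_mul_cancel₀ _ hℓ₀.ne']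
    _ ≤ a x.length * c₂ :=
        mul_le_mul (hle x hx) (hℓ x hx).2 hℓ₀.le ((abs_nonneg _).trans (hle x hx))

open MeasureTheory

variable {Ω : Type*} [MeasurableSpace Ω] {μ : Measure Ω}

lemma integrable_binEntropy_comp [IsFiniteMeasure μ] {X : Ω → ℝ} (hX : AEMeasurable X μ)
    (hX₀₁ : ∀ᵐ ω ∂μ, X ω ∈ Set.Icc 0 1) : Integrable (fun ω => Real.binEntropy (X ω)) μ :=
  .of_mem_Icc 0 (Real.log 2) (Real.binEntropy_continuous.measurable.comp_aemeasurable hX) <|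
    hX₀₁.mono fun _ h₀₁ => ⟨Real.binEntropy_nonneg h₀₁.1 h₀₁.2, Real.binEntropy_le_log_two⟩

lemma tendsto_integral_binEntropy [IsProbabilityMeasure μ] {ι : Type*} {l : Filter ι}
    {X : ι → Ω → ℝ} (hX : ∀ i, AEMeasurable (X i) μ) (hX₀₁ : ∀ i, ∀ᵐ ω ∂μ, X i ω ∈ Set.Icc 0 1)
    (hlim : Tendsto (fun i => ∫ ω, X i ω ∂μ) l (𝓝 0)) :
    Tendsto (fun i => ∫ ω, Real.binEntropy (X i ω) ∂μ) l (𝓝 0) := by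
  have hcomp : Tendsto (fun i => Real.binEntropy (∫ ω, X i ω ∂μ)) l (𝓝 0) := by
    simpa [Function.comp_def] using (Real.binEntropy_continuous.tendsto 0).comp hlim
  have jensen i : ∫ ω, Real.binEntropy (X i ω) ∂μ ≤ Real.binEntropy (∫ ω, X i ω ∂μ) :=
    Real.strictConcave_binEntropy.concaveOn.le_map_integral
      Real.binEntropy_continuous.continuousOn isClosed_Icc (hX₀₁ i)
      (.of_mem_Icc 0 1 (hX i) (hX₀₁ i)) (integrable_binEntropy_comp (hX i) (hX₀₁ i))
  refine squeeze_zero (fun i => integral_nonneg_of_ae ?_) jensen hcomp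
  exact (hX₀₁ i).mono fun _ h₀₁ => Real.binEntropy_nonneg h₀₁.1 h₀₁.2

lemma integrable_entropyModulus_comp [IsFiniteMeasure μ] (C : ℝ) {X : Ω → ℝ}
    (hX : AEMeasurable X μ) (hX₀₁ : ∀ᵐ ω ∂μ, X ω ∈ Set.Icc 0 1) :
    Integrable (fun ω => entropyModulus C (X ω)) μ :=
  ((Integrable.of_mem_Icc 0 1 hX hX₀₁).const_mul C).add
    ((integrable_binEntropy_comp hX hX₀₁).div_const (Real.log 2))

lemma tendsto_integral_entropyModulus [IsProbabilityMeasure μ] {ι : Type*} {l : Filter ι} (C : ℝ)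
    {X : ι → Ω → ℝ} (hX : ∀ i, AEMeasurable (X i) μ) (hX₀₁ : ∀ i, ∀ᵐ ω ∂μ, X i ω ∈ Set.Icc 0 1)
    (hlim : Tendsto (fun i => ∫ ω, X i ω ∂μ) l (𝓝 0)) :
    Tendsto (fun i => ∫ ω, entropyModulus C (X i ω) ∂μ) l (𝓝 0) := by
  have hsum := (hlim.const_mul C).add
    ((tendsto_integral_binEntropy hX hX₀₁ hlim).div_const (Real.log 2))
  rw [mul_zero, zero_div, add_zero] at hsum
  refine hsum.congr fun i => ?_
  simp only [entropyModulus]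
  rw [integral_add ((Integrable.of_mem_Icc 0 1 (hX i) (hX₀₁ i)).const_mul C)
    ((integrable_binEntropy_comp (hX i) (hX₀₁ i)).div_const _), integral_const_mul, integral_div]

lemma tendsto_integral_cesaro {Y : ℕ → Ω → ℝ} (hY : ∀ k, Integrable (Y k) μ) {m : ℝ}
    (hlim : Tendsto (fun k => ∫ ω, Y k ω ∂μ) atTop (𝓝 m)) :
    Tendsto (fun n : ℕ => ∫ ω, (n : ℝ)⁻¹ * ∑ k ∈ Finset.range n, Y k ω ∂μ) atTop (𝓝 m) :=
  hlim.cesaro.congr fun n => by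
    rw [integral_const_mul, integral_finsetSum _ fun k _ => hY k]

lemma tendsto_measure_lt_abs_of_tendsto_integral {ι : Type*} {l : Filter ι} {X Z : ι → Ω → ℝ}
    (hZ : ∀ i, Integrable (Z i) μ) (hXZ : ∀ᶠ i in l, ∀ ω, |X i ω| ≤ Z i ω)
    (hlim : Tendsto (fun i => ∫ ω, Z i ω ∂μ) l (𝓝 0)) {ε : ℝ} (hε : 0 < ε) :
    Tendsto (fun i => μ {ω | ε < |X i ω|}) l (𝓝 0) := by
  have hε₀ : ENNReal.ofReal ε ≠ 0 := (ENNReal.ofReal_pos.2 hε).ne'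
  have hbound : Tendsto (fun i => ENNReal.ofReal (∫ ω, Z i ω ∂μ) / ENNReal.ofReal ε) l (𝓝 0) := by
    simpa using ENNReal.Tendsto.div_const (ENNReal.tendsto_ofReal hlim) (Or.inr hε₀)
  refine tendsto_of_tendsto_of_tendsto_of_le_of_le' tendsto_const_nhds hbound
    (.of_forall fun _ => zero_le) ?_
  filter_upwards [hXZ] with i hi
  calc μ {ω | ε < |X i ω|} ≤ μ {ω | ENNReal.ofReal ε ≤ ENNReal.ofReal (Z i ω)} :=
        measure_mono fun ω hω => ENNReal.ofReal_le_ofReal ((le_of_lt hω).trans (hi ω))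
    _ ≤ (∫⁻ ω, ENNReal.ofReal (Z i ω) ∂μ) / ENNReal.ofReal ε :=
        meas_ge_le_lintegral_div (hZ i).aemeasurable.ennreal_ofReal hε₀ ENNReal.ofReal_ne_top
    _ = ENNReal.ofReal (∫ ω, Z i ω ∂μ) / ENNReal.ofReal ε := by
        rw [ofReal_integral_eq_lintegral_ofReal (hZ i)
          (.of_forall fun ω => (abs_nonneg _).trans (hi ω))]

lemma tendsto_measure_lt_abs_of_abs_le_cesaro {X Y : ℕ → Ω → ℝ} {c : ℝ}
    (hY : ∀ k, Integrable (Y k) μ) (hlim : Tendsto (fun k => ∫ ω, Y k ω ∂μ) atTop (𝓝 0))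
    (hXY : ∀ n, 0 < n → ∀ ω, |X n ω| ≤ c * ((n : ℝ)⁻¹ * ∑ k ∈ Finset.range n, Y k ω))
    {ε : ℝ} (hε : 0 < ε) : Tendsto (fun n => μ {ω | ε < |X n ω|}) atTop (𝓝 0) :=
  tendsto_measure_lt_abs_of_tendsto_integral
    (fun n : ℕ => ((integrable_finsetSum (Finset.range n) fun k _ => hY k).const_mul
      (n : ℝ)⁻¹).const_mul c)
    ((eventually_gt_atTop 0).mono hXY)
    (by simpa [integral_const_mul] using (tendsto_integral_cesaro hY hlim).const_mul c) hε

end Convergence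

open MeasureTheory in
theorem random_perturbation_in_probability_general
    {Ω : Type*} [MeasurableSpace Ω] (Pr : Measure Ω) [IsProbabilityMeasure Pr]
    {T : Set (List ℕ)} (hT : IsTree T) {q q' : List ℕ → List ℕ → ℝ}
    (hq : IsTransition T q) (hq' : IsTransition T q')
    (hq_ent : HasBoundedEntropy T q) (hq'_ent : HasBoundedEntropy T q')
    {δn : ℕ → Ω → ℝ} (hmeas : ∀ n, Measurable (δn n)) (hδ01 : ∀ n ω, δn n ω ∈ Set.Icc (0 : ℝ) 1)
    {ℓ : List ℕ → ℝ} {c₁ c₂ : ℝ} (hc₁ : 0 < c₁) (hℓ : ∀ x ∈ T, c₁ ≤ ℓ x ∧ ℓ x ≤ c₂) {h : ℝ}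
    (hh : ∀ ε, 0 < ε → ∃ k, ∀ x ∈ T, k ≤ x.length → |localEntropy T q x / ℓ x - h| < ε)
    (hE : Tendsto (fun n => ∫ ω, δn n ω ∂Pr) atTop (𝓝 0)) {ε : ℝ} (hε : 0 < ε) :
    Tendsto (fun n => Pr {ω | ε < |(∑' x : levn T n, phi (flowOf (perturb q q' δn) x ω))
      / (∑' x : levn T n, lenWt ℓ x * flowOf (perturb q q' δn) x ω) - h|}) atTop (𝓝 0) := by
  obtain ⟨C, hC⟩ := hq_ent
  obtain ⟨C', hC'⟩ := hq'_ent
  obtain ⟨a, ha, hHa⟩ :=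
    exists_tendsto_zero_abs_localEntropy_sub_le hq (fun x hx => (hC x hx).2) hc₁ hℓ hh
  let K := max C C'
  have hint k : Integrable (fun ω => entropyModulus K (δn k ω)) Pr :=
    integrable_entropyModulus_comp K (hmeas k).aemeasurable (.of_forall (hδ01 k))
  have hlim : Tendsto (fun k => ∫ ω, a k + entropyModulus K (δn k ω) ∂Pr) atTop (𝓝 0) := by
    have hmod := tendsto_integral_entropyModulus K (fun k => (hmeas k).aemeasurable)
      (fun k => .of_forall (hδ01 k)) hE
    simpa [integral_add (integrable_const _) (hint _)] using ha.add hmod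
  refine tendsto_measure_lt_abs_of_abs_le_cesaro (c := c₁⁻¹)
    (fun k => (integrable_const (a k)).add (hint k)) hlim (fun n hn ω => ?_) hε
  refine abs_entropy_div_length_sub_le hT (isTransition_perturb hq hq' fun k => hδ01 k ω)
    (fun x hx => summable_phi_perturb hq hq' hx (hC x hx).1 (hC' x hx).1 (hδ01 _ ω)) hc₁ hℓ
    (fun x hx => ?_) hn
  have hpert := abs_localEntropy_perturb_sub_le hq hq' hx (hC x hx).1 (hC' x hx).1 (hδ01 _ ω)
    ((hC x hx).2.trans (le_max_left C C')) ((hC' x hx).2.trans (le_max_right C C'))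
  exact (abs_sub_le _ _ _).trans ((add_le_add hpert (hHa x hx)).trans_eq (add_comm _ _))

open MeasureTheory in
/-- Random perturbations, convergence in probability: if `E(δ_n) → 0`, then
`H(P_n)/ℓ(P_n) → h` in probability. -/
theorem random_perturbation_in_probability
    {Ω : Type*} [MeasurableSpace Ω] (Pr : Measure Ω) [IsProbabilityMeasure Pr]
    (T : Set (List ℕ)) (hT : IsTree T)
    (hbranch : ∀ x ∈ T, ∃ y ∈ succs T x, ∃ z ∈ succs T x, y ≠ z)
    (q q' : List ℕ → List ℕ → ℝ)
    (hq0 : ∀ x ∈ T, ∀ y ∈ succs T x, 0 ≤ q x y)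
    (hq1 : ∀ x ∈ T, HasSum (fun y : succs T x => q x y) 1)
    (hq'0 : ∀ x ∈ T, ∀ y ∈ succs T x, 0 ≤ q' x y)
    (hq'1 : ∀ x ∈ T, HasSum (fun y : succs T x => q' x y) 1)
    (htq : TightFam T q) (htq' : TightFam T q')
    (δn : ℕ → Ω → ℝ) (hmeas : ∀ n : ℕ, Measurable (δn n))
    (hδ01 : ∀ n ω, δn n ω ∈ Set.Icc (0:ℝ) 1)
    (ℓ : List ℕ → ℝ) (c₁ c₂ : ℝ) (hc₁ : 0 < c₁) (hc₁₂ : c₁ ≤ c₂)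
    (hℓ : ∀ x ∈ T, c₁ ≤ ℓ x ∧ ℓ x ≤ c₂)
    (h : ℝ)
    (hh : ∀ ε : ℝ, 0 < ε → ∃ k : ℕ, ∀ x ∈ T, k ≤ x.length →
      |(∑' y : succs T x, phi (q x y)) / ℓ x - h| < ε)
    (D : ℝ)
    (hD : ∀ x ∈ T,
      (Summable fun y : succs T x => |q' x y * Real.logb 2 (q' x y / q x y)|) ∧
      (∑' y : succs T x, q' x y * Real.logb 2 (q' x y / q x y)) < D)
    (hE : Tendsto (fun n : ℕ => ∫ ω, δn n ω ∂Pr) atTop (nhds 0)) :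
    ∀ ε : ℝ, 0 < ε →
      Tendsto (fun n : ℕ => Pr {ω : Ω |
          ε < |(∑' x : levn T n, phi (flowOf (perturb q q' δn) x ω))
                / (∑' x : levn T n, lenWt ℓ x * flowOf (perturb q q' δn) x ω) - h|})
        atTop (nhds 0) :=
  fun _ => random_perturbation_in_probability_general Pr hT ⟨hq0, hq1⟩ ⟨hq'0, hq'1⟩
    (htq.hasBoundedEntropy hq0) (htq'.hasBoundedEntropy hq'0) hmeas hδ01 hc₁ hℓ hh hE
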